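/- arXiv:2012.08766 — 3 statements merged into one kernel-verified Lean document; each statement's English description precedes it below -/
import Mathlib

section
/- Let 1<p<∞, μ>0 and let w ∈ Q(ℝ₊) be admissible, i.e. there exist η₀>0 and K>0 with ∫_0^t w(s)^{-1} ds ≥ e^{-K/√t} for all 0<t<η₀. Then for every sufficiently small η>0 there exist positive numbers C₀, C₁, L (depending only on w, p, η, μ, not on u) such that for every u ∈ C_c^1((0,η]): ∫_0^η ( |u'(t)|^p − (|u(t)|^p / F_η(t)^p)( Λ_p + C₀ / G_η(t)^2 ) ) W_p(t) dt ≥ C₁ ∫_0^η ( |u'(t)|^p + (|u(t)|^p / F_η(t)^p)( Λ_p + C₀ / G_η(t)^2 ) ) W_p(t) · t dt + L |u(η)|^p. -/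
open MeasureTheory Set

/-- `f_η(t) = ∫_0^t w(s)⁻¹ ds`  (case `w ∈ Q(ℝ₊)`). -/
noncomputable def fQ (w : ℝ → ℝ) (t : ℝ) : ℝ := ∫ s in (0:ℝ)..t, (w s)⁻¹

/-- `F_η(t) = w(t) f_η(t)`. -/
noncomputable def FQ (w : ℝ → ℝ) (t : ℝ) : ℝ := w t * fQ w t

/-- `G_η(t) = μ + ∫_t^η F_η(s)⁻¹ ds`. -/
noncomputable def GQ (w : ℝ → ℝ) (μ η t : ℝ) : ℝ := μ + ∫ s in t..η, (FQ w s)⁻¹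

/-- `W_p(t) = w(t)^(p-1)`. -/
noncomputable def Wp (w : ℝ → ℝ) (p t : ℝ) : ℝ := w t ^ (p - 1)

/-!
The proof is Picone's argument with the field `φ = (q f)^(1 - p) (1 - β / G)`, where `q = p'`.
Since `f' = 1 / w` and `G' = -1 / F`, one has `-φ' = (q F)^(-p) W_p (p (1 - β / G) + q β / G²)`.
When the derivative of `|u|^p φ` is bounded by Young's inequality, the factor `1 - β / G` costs
only `O(β² / G²)`, whereas `-φ'` contributes `q β / G²`. For small `β` the surplus pays for
`C₀ / G²`, and also for the terms carrying `C₁ t`, because admissibility keeps `t G(t)²` bounded.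
Integration produces the boundary term `φ(η) |u(η)|^p`.
-/

open Filter Topology

section Pointwise

variable {p q : ℝ}

lemma young_inequality_weighted (h : p.HolderConjugate q) {a s y ρ : ℝ} (ha : 0 ≤ a)
    (hs : 0 ≤ s) (hy : 0 ≤ y) (hρ : 0 < ρ) :
    p * y * a ^ (p - 1) * s ≤ ρ * s ^ p + (p - 1) * (y ^ q * ρ ^ (1 - q)) * a ^ p := by
  have hp := h.pos
  have hexp : -(1 / p) * q = 1 - q := by
    linear_combination -h.symm.div_conj_eq_sub_one
  have hyoung := Real.young_inequality_of_nonneg (a := ρ ^ (1 / p) * s)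
    (b := y * a ^ (p - 1) * ρ ^ (-(1 / p))) (by positivity) (by positivity) h
  have hleft : (ρ ^ (1 / p) * s) ^ p = ρ * s ^ p := by
    rw [Real.mul_rpow (by positivity) hs, ← Real.rpow_mul hρ.le, one_div_mul_cancel hp.ne',
      Real.rpow_one]
  have hright : (y * a ^ (p - 1) * ρ ^ (-(1 / p))) ^ q = y ^ q * ρ ^ (1 - q) * a ^ p := by
    rw [Real.mul_rpow (by positivity) (by positivity), Real.mul_rpow hy (by positivity),
      ← Real.rpow_mul ha, ← Real.rpow_mul hρ.le, h.sub_one_mul_conj, hexp]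
    ring
  have hprod : ρ ^ (1 / p) * s * (y * a ^ (p - 1) * ρ ^ (-(1 / p))) = y * a ^ (p - 1) * s := by
    have : ρ ^ (1 / p) ≠ 0 := (Real.rpow_pos_of_pos hρ _).ne'
    rw [Real.rpow_neg hρ.le]
    field_simp
  rw [hleft, hright, hprod] at hyoung
  calc p * y * a ^ (p - 1) * s = p * (y * a ^ (p - 1) * s) := by ring
    _ ≤ p * (ρ * s ^ p / p + y ^ q * ρ ^ (1 - q) * a ^ p / q) :=
        mul_le_mul_of_nonneg_left hyoung hp.le
    _ = ρ * s ^ p + p / q * (y ^ q * ρ ^ (1 - q)) * a ^ p := by field_simp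
    _ = _ := by rw [h.div_conj_eq_sub_one]

lemma one_sub_rpow_mul_exp_le (h : p.HolderConjugate q) {x τ : ℝ} (hτ : 0 ≤ τ)
    (hτx : 2 * τ ≤ x) (hx : q * x ≤ 1) :
    (p - 1) * ((1 - x) ^ q * Real.exp (2 * τ * (q - 1))) ≤
      p - 1 - p * x + 2 * τ + p * q * x ^ 2 := by
  have hp := h.sub_one_pos
  have hq := h.symm.lt
  have hpq : (p - 1) * q = p := h.sub_one_mul_conj
  set z := q * x - 2 * τ * (q - 1) with hz
  have hz0 : 0 ≤ z := by nlinarith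
  have hzx : z ≤ q * x := by nlinarith
  have hexp : (1 - x) ^ q * Real.exp (2 * τ * (q - 1)) ≤ Real.exp (-z) := by
    calc (1 - x) ^ q * Real.exp (2 * τ * (q - 1))
        ≤ Real.exp (-x) ^ q * Real.exp (2 * τ * (q - 1)) := by
          gcongr
          · nlinarith
          · exact Real.one_sub_le_exp_neg x
      _ = Real.exp (-z) := by
          rw [← Real.exp_mul, ← Real.exp_add, hz]
          ring_nf
  have htaylor : Real.exp (-z) ≤ 1 - z + z ^ 2 := by
    have := (le_abs_self _).trans (Real.abs_exp_sub_one_sub_id_le (x := -z)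
      (by rw [abs_neg, abs_of_nonneg hz0]; exact hzx.trans hx))
    linarith [neg_sq z]
  calc (p - 1) * ((1 - x) ^ q * Real.exp (2 * τ * (q - 1)))
      ≤ (p - 1) * (1 - z + (q * x) ^ 2) := by
        have : z ^ 2 ≤ (q * x) ^ 2 := by gcongr
        gcongr
        linarith
    _ = p - 1 - p * x + 2 * τ + p * q * x ^ 2 := by
        rw [hz]
        linear_combination (-x + q * x ^ 2 + 2 * τ) * hpq

/-- To be read with `x = β / G`, `δ = β / G²` and `τ = C₁ t`: then `x² = β δ`, so `x` is the
first-order correction, which cancels, and `δ` the second-order gain. -/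
lemma picone_normalized (h : p.HolderConjugate q) {a s x δ τ : ℝ} (ha : 0 ≤ a) (hs : 0 ≤ s)
    (hτ : 0 ≤ τ) (hτx : 2 * τ ≤ x) (hx : q * x ≤ 1) (hτδ : 20 * τ ≤ δ)
    (hxδ : 2 * p * x ^ 2 ≤ δ) :
    p * (1 - x) * a ^ (p - 1) * s - (p * (1 - x) + q * δ) * a ^ p ≤
      (1 - τ) * s ^ p - (1 + τ) * (1 + δ / 8) * a ^ p := by
  have hq := h.symm.lt
  have hx1 : x ≤ 1 := by nlinarith
  have hτ2 : τ ≤ 1 / 2 := by linarith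
  -- With the weight `ρ = exp (-2τ) ≤ 1 - τ`, both factors of `(1 - x)^q ρ^(1 - q)` are bounded by
  -- exponentials, so that a single second-order expansion estimates their product.
  have hyoung := young_inequality_weighted h ha hs (sub_nonneg.2 hx1) (Real.exp_pos (-(2 * τ)))
  rw [← Real.exp_mul, show -(2 * τ) * (1 - q) = 2 * τ * (q - 1) by ring] at hyoung
  have hexp : Real.exp (-(2 * τ)) ≤ 1 - τ := by
    rw [Real.exp_neg, inv_le_iff_one_le_mul₀ (Real.exp_pos _)]
    nlinarith [Real.add_one_le_exp (2 * τ), hτ2]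
  have hcoeff : (p - 1) * ((1 - x) ^ q * Real.exp (2 * τ * (q - 1))) + (1 + τ) * (1 + δ / 8) ≤
      p * (1 - x) + q * δ := by
    have := one_sub_rpow_mul_exp_le h hτ hτx hx
    nlinarith
  have := mul_le_mul_of_nonneg_right hexp (Real.rpow_nonneg hs p)
  have := mul_le_mul_of_nonneg_right hcoeff (Real.rpow_nonneg ha p)
  linarith

lemma abs_rpow_sub_two_mul_mul_le (hp : p ≠ 1) (u v : ℝ) :
    |u| ^ (p - 2) * u * v ≤ |u| ^ (p - 1) * |v| := by
  rcases eq_or_ne u 0 with rfl | hu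
  · simp [Real.zero_rpow (sub_ne_zero.2 hp)]
  calc |u| ^ (p - 2) * u * v ≤ |(|u| ^ (p - 2) * u * v)| := le_abs_self _
    _ = |u| ^ (p - 2) * |u| * |v| := by
        rw [abs_mul, abs_mul, abs_of_nonneg (Real.rpow_nonneg (abs_nonneg u) _)]
    _ = |u| ^ (p - 1) * |v| := by
        rw [← Real.rpow_add_one (abs_pos.2 hu).ne']
        ring_nf

lemma picone_pointwise (h : p.HolderConjugate q) {u v E x δ τ : ℝ} (hE : 0 < E)
    (hτ : 0 ≤ τ) (hτx : 2 * τ ≤ x) (hx : q * x ≤ 1) (hτδ : 20 * τ ≤ δ)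
    (hxδ : 2 * p * x ^ 2 ≤ δ) :
    p * |u| ^ (p - 2) * u * v * (E ^ (1 - p) * (1 - x)) -
        |u| ^ p / E ^ p * (p * (1 - x) + q * δ) ≤
      (1 - τ) * |v| ^ p - (1 + τ) * (|u| ^ p / E ^ p * (1 + δ / 8)) := by
  have hp := h.pos
  have hx1 : 0 ≤ 1 - x := by nlinarith [h.symm.lt]
  have hpicone := picone_normalized h (a := |u| / E) (by positivity) (abs_nonneg v)
    hτ hτx hx hτδ hxδ
  rw [Real.div_rpow (abs_nonneg u) hE.le, Real.div_rpow (abs_nonneg u) hE.le] at hpicone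
  have hcross : p * |u| ^ (p - 2) * u * v * (E ^ (1 - p) * (1 - x)) ≤
      p * (1 - x) * (|u| ^ (p - 1) / E ^ (p - 1)) * |v| :=
    calc p * |u| ^ (p - 2) * u * v * (E ^ (1 - p) * (1 - x))
        = p * (1 - x) * E ^ (1 - p) * (|u| ^ (p - 2) * u * v) := by ring
      _ ≤ p * (1 - x) * E ^ (1 - p) * (|u| ^ (p - 1) * |v|) :=
          mul_le_mul_of_nonneg_left (abs_rpow_sub_two_mul_mul_le h.lt.ne' u v) (by positivity)
      _ = p * (1 - x) * (|u| ^ (p - 1) / E ^ (p - 1)) * |v| := by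
          rw [← neg_sub p 1, Real.rpow_neg hE.le]
          ring
  linarith

end Pointwise

section Interval

lemma intervalIntegrable_of_continuousOn_Ioc_of_eventuallyEq_zero {E : Type*}
    [NormedAddCommGroup E] {ν : Measure ℝ} [IsLocallyFiniteMeasure ν] {g : ℝ → E} {a b : ℝ}
    (hab : a ≤ b) (hg : ContinuousOn g (Ioc a b)) (hg₀ : g =ᶠ[𝓝[>] a] 0) :
    IntervalIntegrable g ν a b := by
  obtain ⟨c, hac, hc⟩ := (mem_nhdsGT_iff_exists_Ioo_subset (a := a)).1 hg₀
  rw [intervalIntegrable_iff_integrableOn_Ioc_of_le hab]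
  have hleft : IntegrableOn g (Ioo a c) ν :=
    integrableOn_zero.congr_fun (fun _ ht => (hc ht).symm) measurableSet_Ioo
  have hright : IntegrableOn g (Icc c b) ν :=
    (hg.mono fun _ ht => ⟨lt_of_lt_of_le hac ht.1, ht.2⟩).integrableOn_Icc
  refine (hleft.union hright).mono_set fun t ht => ?_
  exact (lt_or_ge t c).imp (fun h => ⟨ht.1, h⟩) fun h => ⟨h, ht.2⟩

lemma bddAbove_image_Ioc_of_eventually_le {α γ : Type*} [ConditionallyCompleteLinearOrder α]
    [TopologicalSpace α] [OrderTopology α] [NoMaxOrder α] [LinearOrder γ] [TopologicalSpace γ]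
    [ClosedIciTopology γ] {g : α → γ} {a b : α} {B : γ}
    (hg : ContinuousOn g (Ioc a b)) (hB : ∀ᶠ t in 𝓝[>] a, g t ≤ B) :
    BddAbove (g '' Ioc a b) := by
  obtain ⟨c, hac, hc⟩ := (mem_nhdsGT_iff_exists_Ioo_subset (a := a)).1 hB
  have : Nonempty γ := ⟨B⟩
  have hleft : BddAbove (g '' Ioo a c) := ⟨B, by rintro _ ⟨t, ht, rfl⟩; exact hc ht⟩
  have hright : BddAbove (g '' Icc c b) := isCompact_Icc.bddAbove_image
    (hg.mono fun _ ht => ⟨lt_of_lt_of_le hac ht.1, ht.2⟩)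
  refine (hleft.union hright).mono ?_
  rw [← image_union]
  exact image_mono fun t ht => (lt_or_ge t c).imp (fun h => ⟨ht.1, h⟩) fun h => ⟨h, ht.2⟩

end Interval

/-- `u ∈ C_c^1((0, η])` with derivative `u'`, one-sided at `η`. The function is extended by zero to
`(-∞, 0]`; its values beyond `η` are arbitrary. -/
structure IsTestFunction (η : ℝ) (u u' : ℝ → ℝ) : Prop where
  hasDerivWithinAt : ∀ t ∈ Ioc 0 η, HasDerivWithinAt u (u' t) (Ioc 0 η) t
  continuousOn_deriv : ContinuousOn u' (Ioc 0 η)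
  exists_eq_zero : ∃ a, 0 < a ∧ ∀ t ≤ a, u t = 0

namespace IsTestFunction

variable {η : ℝ} {u u' : ℝ → ℝ}

lemma continuousOn (hu : IsTestFunction η u u') : ContinuousOn u (Ioc 0 η) := fun t ht =>
  (hu.hasDerivWithinAt t ht).continuousWithinAt

lemma hasDerivAt (hu : IsTestFunction η u u') {t : ℝ} (ht : t ∈ Ioo 0 η) :
    HasDerivAt u (u' t) t :=
  (hu.hasDerivWithinAt t (Ioo_subset_Ioc_self ht)).hasDerivAt (Ioc_mem_nhds ht.1 ht.2)

lemma eventuallyEq_zero (hu : IsTestFunction η u u') : u =ᶠ[𝓝 0] 0 := by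
  obtain ⟨a, ha, hua⟩ := hu.exists_eq_zero
  filter_upwards [Iio_mem_nhds ha] with t ht using hua t ht.le

lemma deriv_eventuallyEq_zero (hu : IsTestFunction η u u') (hη : 0 < η) :
    u' =ᶠ[𝓝[>] 0] 0 := by
  filter_upwards [hu.eventuallyEq_zero.eventually_nhds.filter_mono nhdsWithin_le_nhds,
    Ioo_mem_nhdsGT hη] with t hut ht
  exact (hu.hasDerivAt ht).unique ((hasDerivAt_const t 0).congr_of_eventuallyEq hut)

lemma intervalIntegrable_abs_deriv_rpow_mul (hu : IsTestFunction η u u') (hη : 0 < η) {p : ℝ}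
    (hp : 0 < p) {ρ : ℝ → ℝ} (hρ : ContinuousOn ρ (Ioc 0 η)) :
    IntervalIntegrable (fun t => |u' t| ^ p * ρ t) volume 0 η := by
  refine intervalIntegrable_of_continuousOn_Ioc_of_eventuallyEq_zero hη.le
    ((hu.continuousOn_deriv.abs.rpow_const fun _ _ => Or.inr hp.le).mul hρ) ?_
  filter_upwards [hu.deriv_eventuallyEq_zero hη] with t ht
  simp [ht, Real.zero_rpow hp.ne']

lemma abs_rpow_mul_le_integral (hu : IsTestFunction η u u') (hη : 0 < η) {p : ℝ} (hp : 1 < p)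
    {φ φ' g : ℝ → ℝ} (hφ : ∀ t ∈ Ioc 0 η, HasDerivWithinAt φ (φ' t) (Ioc 0 η) t)
    (hg : IntervalIntegrable g volume 0 η)
    (hle : ∀ t ∈ Ioo 0 η, p * |u t| ^ (p - 2) * u t * u' t * φ t + |u t| ^ p * φ' t ≤ g t) :
    |u η| ^ p * φ η ≤ ∫ t in (0 : ℝ)..η, g t := by
  have hp0 : 0 < p := by linarith
  have hzero : (fun t => |u t| ^ p * φ t) =ᶠ[𝓝 0] 0 := by
    filter_upwards [hu.eventuallyEq_zero] with t ht
    simp [ht, Real.zero_rpow hp0.ne']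
  have hcont : ContinuousOn (fun t => |u t| ^ p * φ t) (Icc 0 η) := by
    rw [← Ioc_insert_left hη.le]
    rintro t (rfl | ht)
    · exact (continuousAt_const.congr hzero.symm).continuousWithinAt
    · have hφt : ContinuousWithinAt φ (Ioc 0 η) t := (hφ t ht).continuousWithinAt
      have hut : ContinuousWithinAt (fun t => |u t| ^ p) (Ioc 0 η) t :=
        (hu.continuousOn t ht).abs.rpow_const (Or.inr hp0.le)
      exact continuousWithinAt_insert.2 (hut.mul hφt)
  have hderiv : ∀ t ∈ Ioo 0 η, HasDerivWithinAt (fun t => |u t| ^ p * φ t)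
      (p * |u t| ^ (p - 2) * u t * u' t * φ t + |u t| ^ p * φ' t) (Ioi t) t := fun t ht =>
    (((hasDerivAt_abs_rpow (u t) hp).comp t (hu.hasDerivAt ht)).mul
      ((hφ t (Ioo_subset_Ioc_self ht)).hasDerivAt (Ioc_mem_nhds ht.1 ht.2))).hasDerivWithinAt
  have hint : IntegrableOn g (Icc 0 η) :=
    (intervalIntegrable_iff_integrableOn_Icc_of_le hη.le).1 hg
  have hftc := intervalIntegral.sub_le_integral_of_hasDeriv_right_of_le hη.le hcont hderiv hint hle
  rwa [show |u 0| ^ p * φ 0 = 0 from hzero.self_of_nhds, sub_zero] at hftc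

end IsTestFunction

/-- A positive continuous weight `w` on `(0, ∞)` with `1 / w` integrable near `0`. Every
`w ∈ Q(ℝ₊)` is of this kind. -/
structure IsQWeight (w : ℝ → ℝ) : Prop where
  pos : ∀ t, 0 < t → 0 < w t
  continuousOn : ContinuousOn w (Ioi 0)
  integrableOn_inv : ∀ b, 0 < b → IntegrableOn (fun s => (w s)⁻¹) (Ioo 0 b)

/-- The field `(q f_η)^(1 - p) (1 - β / G_η)` which Picone's argument pairs with `|u|^p`.
For `β = 0` it is the one that gives the sharp constant `Λ_p`; `β > 0` makes room for the
remainder. -/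
noncomputable def hardyField (w : ℝ → ℝ) (p q β μ η t : ℝ) : ℝ :=
  (q * fQ w t) ^ (1 - p) * (1 - β / GQ w μ η t)

/-- The refined Hardy potential term `|u|^p F_η^(-p) (Λ_p + C / G_η²)`. -/
noncomputable def hardyPotential (w : ℝ → ℝ) (p C μ η : ℝ) (u : ℝ → ℝ) (t : ℝ) : ℝ :=
  |u t| ^ p / FQ w t ^ p * ((1 - 1 / p) ^ p + C / GQ w μ η t ^ 2)

lemma hardyPotential_eq_mul_one_add {p q : ℝ} (h : p.HolderConjugate q) {w : ℝ → ℝ} {t : ℝ}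
    (hF : 0 ≤ FQ w t) (β μ η : ℝ) (u : ℝ → ℝ) :
    hardyPotential w p ((1 - 1 / p) ^ p * β / 8) μ η u t =
      |u t| ^ p / (q * FQ w t) ^ p * (1 + β / GQ w μ η t ^ 2 / 8) := by
  have hq : 1 - 1 / p = q⁻¹ := by rw [one_div, h.one_sub_inv]
  rw [hardyPotential, Real.mul_rpow h.symm.nonneg hF, hq, Real.inv_rpow h.symm.nonneg]
  ring

namespace IsQWeight

variable {w : ℝ → ℝ} {μ η t : ℝ}

lemma intervalIntegrable_inv (hw : IsQWeight w) (ht : 0 < t) :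
    IntervalIntegrable (fun s => (w s)⁻¹) volume 0 t := by
  rw [intervalIntegrable_iff_integrableOn_Ioo_of_le ht.le]
  exact hw.integrableOn_inv t ht

lemma fQ_pos (hw : IsQWeight w) (ht : 0 < t) : 0 < fQ w t :=
  intervalIntegral.intervalIntegral_pos_of_pos_on (hw.intervalIntegrable_inv ht)
    (fun s hs => inv_pos.2 (hw.pos s hs.1)) ht

lemma FQ_pos (hw : IsQWeight w) (ht : 0 < t) : 0 < FQ w t := mul_pos (hw.pos t ht) (hw.fQ_pos ht)

lemma hasDerivAt_fQ (hw : IsQWeight w) (ht : 0 < t) : HasDerivAt (fQ w) (w t)⁻¹ t := by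
  have hcont : ContinuousOn (fun s => (w s)⁻¹) (Ioi 0) :=
    hw.continuousOn.inv₀ fun s hs => (hw.pos s hs).ne'
  exact intervalIntegral.integral_hasDerivAt_right (hw.intervalIntegrable_inv ht)
    (hcont.stronglyMeasurableAtFilter isOpen_Ioi t ht) (hcont.continuousAt (Ioi_mem_nhds ht))

lemma continuousOn_FQ (hw : IsQWeight w) : ContinuousOn (FQ w) (Ioi 0) :=
  hw.continuousOn.mul fun _ ht => (hw.hasDerivAt_fQ ht).continuousAt.continuousWithinAt

lemma hasDerivAt_log_fQ (hw : IsQWeight w) (ht : 0 < t) :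
    HasDerivAt (fun s => Real.log (fQ w s)) (FQ w t)⁻¹ t :=
  ((hw.hasDerivAt_fQ ht).log (hw.fQ_pos ht).ne').congr_deriv (by
    rw [FQ, mul_inv, div_eq_mul_inv])

lemma GQ_eq_log (hw : IsQWeight w) (μ : ℝ) (hη : 0 < η) (ht : 0 < t) :
    GQ w μ η t = μ + (Real.log (fQ w η) - Real.log (fQ w t)) := by
  have hsub : uIcc t η ⊆ Ioi 0 := fun s hs => lt_of_lt_of_le (lt_min ht hη) hs.1
  rw [GQ, intervalIntegral.integral_eq_sub_of_hasDerivAt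
    (fun s hs => hw.hasDerivAt_log_fQ (hsub hs))]
  exact ((hw.continuousOn_FQ.mono hsub).inv₀ fun s hs =>
    (hw.FQ_pos (hsub hs)).ne').intervalIntegrable

lemma hasDerivAt_GQ (hw : IsQWeight w) (μ : ℝ) (hη : 0 < η) (ht : 0 < t) :
    HasDerivAt (GQ w μ η) (-(FQ w t)⁻¹) t := by
  refine (((hw.hasDerivAt_log_fQ ht).const_sub (Real.log (fQ w η))).const_add μ
    ).congr_of_eventuallyEq ?_
  filter_upwards [Ioi_mem_nhds ht] with s hs using hw.GQ_eq_log μ hη hs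

lemma le_GQ (hw : IsQWeight w) (μ : ℝ) (ht : t ∈ Ioc 0 η) : μ ≤ GQ w μ η t :=
  le_add_of_nonneg_right <| intervalIntegral.integral_nonneg ht.2 fun _ hs =>
    (inv_pos.2 (hw.FQ_pos (ht.1.trans_le hs.1))).le

lemma hasDerivAt_hardyField (hw : IsQWeight w) {p q : ℝ} (h : p.HolderConjugate q) (β : ℝ)
    (hη : 0 < η) (ht : 0 < t) (hG : GQ w μ η t ≠ 0) :
    HasDerivAt (hardyField w p q β μ η)
      (-(Wp w p t / (q * FQ w t) ^ p *
        (p * (1 - β / GQ w μ η t) + q * (β / GQ w μ η t ^ 2)))) t := by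
  have hq := h.symm.pos
  have hw0 := hw.pos t ht
  have hf0 := hw.fQ_pos ht
  have hqf : 0 < q * fQ w t := mul_pos hq hf0
  have hrpow := ((hw.hasDerivAt_fQ ht).const_mul q).rpow_const (p := 1 - p) (Or.inl hqf.ne')
  have hfactor := (((hw.hasDerivAt_GQ μ hη ht).inv hG).const_mul β).const_sub 1
  have hweight : Wp w p t / (q * FQ w t) ^ p = (q * fQ w t) ^ (-p) / w t := by
    rw [Wp, FQ, mul_left_comm, Real.mul_rpow hw0.le hqf.le, Real.rpow_sub_one hw0.ne',
      Real.rpow_neg hqf.le]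
    field_simp
  have hpow : (q * fQ w t) ^ (1 - p) = (q * fQ w t) ^ (-p) * (q * fQ w t) := by
    rw [← Real.rpow_add_one hqf.ne', neg_add_eq_sub]
  refine (hrpow.mul hfactor).congr_deriv ?_
  rw [hweight, Pi.inv_apply, sub_sub_cancel_left, hpow, FQ]
  field_simp
  linear_combination (GQ w μ η t * β - GQ w μ η t ^ 2) * h.mul_eq_add

lemma hardyField_eq_Wp_mul (hw : IsQWeight w) (p : ℝ) {q : ℝ} (hq : 0 ≤ q) (β μ η : ℝ)
    (ht : 0 < t) :
    hardyField w p q β μ η t =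
      Wp w p t * ((q * FQ w t) ^ (1 - p) * (1 - β / GQ w μ η t)) := by
  have hw0 := hw.pos t ht
  rw [hardyField, Wp, FQ, mul_left_comm q,
    Real.mul_rpow hw0.le (mul_nonneg hq (hw.fQ_pos ht).le), ← mul_assoc, ← mul_assoc,
    ← Real.rpow_add hw0, sub_add_sub_cancel', sub_self, Real.rpow_zero, one_mul]

lemma hardyField_pos (hw : IsQWeight w) (p : ℝ) {q β : ℝ} (hq : 0 < q) (ht : t ∈ Ioc 0 η)
    (hμ : 0 < μ) (hβμ : β < μ) : 0 < hardyField w p q β μ η t := by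
  have hG := hw.le_GQ μ ht
  have : 0 < 1 - β / GQ w μ η t := by
    rw [sub_pos, div_lt_one (hμ.trans_le hG)]
    exact hβμ.trans_le hG
  have := hw.fQ_pos ht.1
  rw [hardyField]
  positivity

lemma eventually_mul_GQ_sq_le (hw : IsQWeight w) {K : ℝ} (hμ : 0 ≤ μ) (hη : 0 < η)
    (hadm : ∀ᶠ t in 𝓝[>] 0, Real.exp (-K / √t) ≤ fQ w t) :
    ∀ᶠ t in 𝓝[>] 0, t * GQ w μ η t ^ 2 ≤ (1 + K) ^ 2 := by
  have hsmall : ∀ᶠ t in 𝓝[>] (0 : ℝ), √t * (μ + Real.log (fQ w η)) < 1 := by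
    refine Tendsto.eventually_lt_const (v := 0) one_pos (tendsto_nhdsWithin_of_tendsto_nhds ?_)
    simpa using (Real.continuous_sqrt.mul_const (μ + Real.log (fQ w η))).tendsto 0
  filter_upwards [hadm, hsmall, Ioc_mem_nhdsGT hη] with t hK hlt ht
  have hsqrt : 0 < √t := Real.sqrt_pos.2 ht.1
  have hlog : -K ≤ Real.log (fQ w t) * √t := by
    rwa [← div_le_iff₀ hsqrt, Real.le_log_iff_exp_le (hw.fQ_pos ht.1)]
  have hG : 0 ≤ GQ w μ η t := hμ.trans (hw.le_GQ μ ht)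
  have hle : √t * GQ w μ η t ≤ 1 + K := by
    rw [hw.GQ_eq_log μ hη ht.1]
    linarith
  calc t * GQ w μ η t ^ 2 = (√t * GQ w μ η t) ^ 2 := by rw [mul_pow, Real.sq_sqrt ht.1.le]
    _ ≤ (1 + K) ^ 2 := by gcongr

lemma exists_forall_mul_GQ_sq_le (hw : IsQWeight w) {K : ℝ} (hμ : 0 ≤ μ) (hη : 0 < η)
    (hadm : ∀ᶠ t in 𝓝[>] 0, Real.exp (-K / √t) ≤ fQ w t) :
    ∃ M, 0 < M ∧ ∀ t ∈ Ioc 0 η, t * GQ w μ η t ^ 2 ≤ M := by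
  have hcont : ContinuousOn (fun t => t * GQ w μ η t ^ 2) (Ioc 0 η) := fun t ht =>
    (continuousAt_id.mul ((hw.hasDerivAt_GQ μ hη ht.1).continuousAt.pow 2)).continuousWithinAt
  obtain ⟨M, hM⟩ := bddAbove_image_Ioc_of_eventually_le hcont
    (hw.eventually_mul_GQ_sq_le hμ hη hadm)
  exact ⟨max M 1, by positivity, fun t ht => (hM (mem_image_of_mem _ ht)).trans (le_max_left _ _)⟩

lemma hardy_pointwise (hw : IsQWeight w) {p q β τ : ℝ} (h : p.HolderConjugate q) (hμ : 0 < μ)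
    (ht : t ∈ Ioc 0 η) (hβ : 0 < β) (hβp : 2 * p * β ≤ 1) (hβq : q * β ≤ μ) (hτ : 0 ≤ τ)
    (hτμ : 2 * τ * GQ w μ η t ^ 2 ≤ β * μ) (hτG : 20 * τ * GQ w μ η t ^ 2 ≤ β)
    (u u' : ℝ → ℝ) :
    p * |u t| ^ (p - 2) * u t * u' t * hardyField w p q β μ η t +
        |u t| ^ p * -(Wp w p t / (q * FQ w t) ^ p *
          (p * (1 - β / GQ w μ η t) + q * (β / GQ w μ η t ^ 2))) ≤
      (|u' t| ^ p - hardyPotential w p ((1 - 1 / p) ^ p * β / 8) μ η u t) * Wp w p t -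
        (|u' t| ^ p + hardyPotential w p ((1 - 1 / p) ^ p * β / 8) μ η u t) * Wp w p t * τ := by
  have hq := h.symm.pos
  have hμG := hw.le_GQ μ ht
  have hF := hw.FQ_pos ht.1
  rw [hw.hardyField_eq_Wp_mul p hq.le β μ η ht.1, hardyPotential_eq_mul_one_add h hF.le]
  set G := GQ w μ η t
  have hG : 0 < G := hμ.trans_le hμG
  have hpicone := picone_pointwise h (u := u t) (v := u' t) (E := q * FQ w t) (x := β / G)
    (δ := β / G ^ 2) (mul_pos hq hF) hτ
    (by
      rw [le_div_iff₀ hG]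
      nlinarith)
    (by
      rw [← mul_div_assoc, div_le_one hG]
      exact hβq.trans hμG)
    (by rwa [le_div_iff₀ (by positivity)])
    (by
      rw [div_pow, ← mul_div_assoc]
      gcongr
      nlinarith)
  have hW : 0 ≤ Wp w p t := Real.rpow_nonneg (hw.pos t ht.1).le _
  linear_combination mul_le_mul_of_nonneg_left hpicone hW

variable {u u' : ℝ → ℝ}

lemma continuousOn_Wp (hw : IsQWeight w) (p : ℝ) : ContinuousOn (Wp w p) (Ioi 0) :=
  hw.continuousOn.rpow_const fun t ht => Or.inl (hw.pos t ht).ne'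

lemma continuousOn_hardyPotential (hw : IsQWeight w) {p : ℝ} (hp : 0 ≤ p) (C : ℝ) (hμ : 0 < μ)
    (hη : 0 < η) (hu : ContinuousOn u (Ioc 0 η)) :
    ContinuousOn (hardyPotential w p C μ η u) (Ioc 0 η) := by
  have hG : ContinuousOn (GQ w μ η) (Ioc 0 η) := fun t ht =>
    (hw.hasDerivAt_GQ μ hη ht.1).continuousAt.continuousWithinAt
  have hF : ContinuousOn (fun t => FQ w t ^ p) (Ioc 0 η) :=
    (hw.continuousOn_FQ.mono Ioc_subset_Ioi_self).rpow_const fun _ _ => Or.inr hp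
  have hup : ContinuousOn (fun t => |u t| ^ p) (Ioc 0 η) :=
    hu.abs.rpow_const fun _ _ => Or.inr hp
  exact (hup.div hF fun t ht => (Real.rpow_pos_of_pos (hw.FQ_pos ht.1) p).ne').mul
    (continuousOn_const.add (continuousOn_const.div (hG.pow 2) fun t ht =>
      pow_ne_zero 2 (hμ.trans_le (hw.le_GQ μ ht)).ne'))

lemma intervalIntegrable_hardyPotential_mul (hw : IsQWeight w) {p : ℝ} (hp : 0 < p) (C : ℝ)
    (hμ : 0 < μ) (hη : 0 < η) (hu : IsTestFunction η u u') {ρ : ℝ → ℝ}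
    (hρ : ContinuousOn ρ (Ioc 0 η)) :
    IntervalIntegrable (fun t => hardyPotential w p C μ η u t * ρ t) volume 0 η := by
  refine intervalIntegrable_of_continuousOn_Ioc_of_eventuallyEq_zero hη.le
    ((hw.continuousOn_hardyPotential hp.le C hμ hη hu.continuousOn).mul hρ) ?_
  filter_upwards [hu.eventuallyEq_zero.filter_mono nhdsWithin_le_nhds] with t ht
  simp [hardyPotential, ht, Real.zero_rpow hp.ne']

theorem hardy_remainder (hw : IsQWeight w) {p q β : ℝ} (h : p.HolderConjugate q)
    (hμ : 0 < μ) (hη : 0 < η) (hβ : 0 < β) (hβp : 2 * p * β ≤ 1) (hβq : q * β ≤ μ)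
    {σ : ℝ → ℝ} (hσ : ContinuousOn σ (Ioc 0 η)) (hσ₀ : ∀ t ∈ Ioc 0 η, 0 ≤ σ t)
    (hσμ : ∀ t ∈ Ioc 0 η, 2 * σ t * GQ w μ η t ^ 2 ≤ β * μ)
    (hσG : ∀ t ∈ Ioc 0 η, 20 * σ t * GQ w μ η t ^ 2 ≤ β) (hu : IsTestFunction η u u') :
    (∫ t in (0 : ℝ)..η, (|u' t| ^ p + hardyPotential w p ((1 - 1 / p) ^ p * β / 8) μ η u t) *
        Wp w p t * σ t) + hardyField w p q β μ η η * |u η| ^ p ≤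
      ∫ t in (0 : ℝ)..η, (|u' t| ^ p - hardyPotential w p ((1 - 1 / p) ^ p * β / 8) μ η u t) *
        Wp w p t := by
  have hW := (hw.continuousOn_Wp p).mono (Ioc_subset_Ioi_self : Ioc 0 η ⊆ Ioi 0)
  have hdiff : IntervalIntegrable (fun t =>
      (|u' t| ^ p - hardyPotential w p ((1 - 1 / p) ^ p * β / 8) μ η u t) * Wp w p t)
      volume 0 η := by
    simpa only [sub_mul] using (hu.intervalIntegrable_abs_deriv_rpow_mul hη h.pos hW).sub
      (hw.intervalIntegrable_hardyPotential_mul h.pos _ hμ hη hu hW)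
  have hsum : IntervalIntegrable (fun t =>
      (|u' t| ^ p + hardyPotential w p ((1 - 1 / p) ^ p * β / 8) μ η u t) * Wp w p t * σ t)
      volume 0 η := by
    simpa only [add_mul, mul_assoc, Pi.mul_apply] using
      (hu.intervalIntegrable_abs_deriv_rpow_mul hη h.pos (hW.mul hσ)).add
        (hw.intervalIntegrable_hardyPotential_mul h.pos _ hμ hη hu (hW.mul hσ))
  have hpicone := hu.abs_rpow_mul_le_integral hη h.lt
    (fun t ht => (hw.hasDerivAt_hardyField h β hη ht.1
      (hμ.trans_le (hw.le_GQ μ ht)).ne').hasDerivWithinAt)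
    (hdiff.sub hsum) fun t ht => by
      have ht' := Ioo_subset_Ioc_self ht
      exact hw.hardy_pointwise h hμ ht' hβ hβp hβq (hσ₀ t ht') (hσμ t ht') (hσG t ht') u u'
  rw [intervalIntegral.integral_sub hdiff hsum] at hpicone
  linarith

end IsQWeight

theorem hardy_Q_admissible_refined_general {p μ K η : ℝ} (hp : 1 < p) (hμ : 0 < μ) {w : ℝ → ℝ}
    (hw : IsQWeight w) (hadm : ∀ᶠ t in 𝓝[>] 0, Real.exp (-K / √t) ≤ fQ w t) (hη : 0 < η) :
    ∃ C₀ C₁ L : ℝ, 0 < C₀ ∧ 0 < C₁ ∧ 0 < L ∧ ∀ u u' : ℝ → ℝ, IsTestFunction η u u' →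
      C₁ * (∫ t in (0 : ℝ)..η, (|u' t| ^ p + |u t| ^ p / FQ w t ^ p *
          ((1 - 1 / p) ^ p + C₀ / GQ w μ η t ^ 2)) * Wp w p t * t) + L * |u η| ^ p ≤
        ∫ t in (0 : ℝ)..η, (|u' t| ^ p - |u t| ^ p / FQ w t ^ p *
          ((1 - 1 / p) ^ p + C₀ / GQ w μ η t ^ 2)) * Wp w p t := by
  obtain ⟨q, h⟩ : ∃ q, p.HolderConjugate q := ⟨_, .conjExponent hp⟩
  have hp0 := h.pos
  have hq := h.symm.lt
  obtain ⟨M, hM, hGM⟩ := hw.exists_forall_mul_GQ_sq_le hμ.le hη hadm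
  obtain ⟨β, hβ, hβp, hβq⟩ : ∃ β, 0 < β ∧ 2 * p * β ≤ 1 ∧ q * β ≤ μ :=
    ⟨min (1 / (2 * p)) (μ / q), by positivity,
      (le_div_iff₀' (by positivity)).1 (min_le_left _ _),
      (le_div_iff₀' (by positivity)).1 (min_le_right _ _)⟩
  obtain ⟨C₁, hC₁, hC₁μ, hC₁β⟩ : ∃ C₁, 0 < C₁ ∧ 2 * M * C₁ ≤ β * μ ∧ 20 * M * C₁ ≤ β :=
    ⟨min (β * μ / (2 * M)) (β / (20 * M)), by positivity,
      (le_div_iff₀' (by positivity)).1 (min_le_left _ _),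
      (le_div_iff₀' (by positivity)).1 (min_le_right _ _)⟩
  have hC₁G : ∀ t ∈ Ioc 0 η, C₁ * t * GQ w μ η t ^ 2 ≤ M * C₁ := fun t ht => by
    nlinarith [hGM t ht]
  have hΛ : 0 < 1 - 1 / p := by rw [sub_pos, div_lt_one hp0]; exact hp
  refine ⟨(1 - 1 / p) ^ p * β / 8, C₁, hardyField w p q β μ η η, by positivity, hC₁,
    hw.hardyField_pos p (by linarith) ⟨hη, le_rfl⟩ hμ (by nlinarith), fun u u' hu => ?_⟩
  have hmain := hw.hardy_remainder h hμ hη hβ hβp hβq (σ := fun t => C₁ * t) (by fun_prop)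
    (fun t ht => mul_nonneg hC₁.le ht.1.le) (fun t ht => by linarith [hC₁G t ht])
    (fun t ht => by linarith [hC₁G t ht]) hu
  simpa only [mul_left_comm _ C₁, intervalIntegral.integral_const_mul, hardyPotential] using hmain

/-- For admissible `w ∈ Q(ℝ₊)` and all sufficiently small `η > 0`,
a refined weighted Hardy inequality holds with first-order (in `t`) remainder and
boundary term `+ L |u(η)|^p`. -/
theorem hardy_Q_admissible_refined (p μ : ℝ) (hp : 1 < p) (hμ : 0 < μ)
    (w : ℝ → ℝ)
    (hw_pos : ∀ t, 0 < t → 0 < w t)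
    (hw_smooth : ContDiffOn ℝ 1 w (Set.Ioi 0))
    (hw_lim : ∃ a : ENNReal, Filter.Tendsto (fun t => ENNReal.ofReal (w t))
        (nhdsWithin (0:ℝ) (Set.Ioi 0)) (nhds a))
    (hwQ : ∀ b, 0 < b → MeasureTheory.IntegrableOn (fun s => (w s)⁻¹) (Set.Ioo 0 b))
    (hadm : ∃ η₀ K : ℝ, 0 < η₀ ∧ 0 < K ∧ ∀ t, 0 < t → t < η₀ →
        Real.exp (-K / Real.sqrt t) ≤ ∫ s in (0:ℝ)..t, (w s)⁻¹) :
    ∃ η₁ : ℝ, 0 < η₁ ∧ ∀ η : ℝ, 0 < η → η ≤ η₁ →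
      ∃ C₀ C₁ L : ℝ, 0 < C₀ ∧ 0 < C₁ ∧ 0 < L ∧
        ∀ u u' : ℝ → ℝ,
          (∀ t ∈ Set.Ioc (0:ℝ) η, HasDerivWithinAt u (u' t) (Set.Ioc (0:ℝ) η) t) →
          ContinuousOn u' (Set.Ioc (0:ℝ) η) →
          (∃ a, 0 < a ∧ ∀ t ≤ a, u t = 0) →
          (∫ t in (0:ℝ)..η,
              (|u' t| ^ p - |u t| ^ p / FQ w t ^ p *
                  ((1 - 1 / p) ^ p + C₀ / GQ w μ η t ^ 2)) * Wp w p t)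
          ≥ C₁ * (∫ t in (0:ℝ)..η,
              (|u' t| ^ p + |u t| ^ p / FQ w t ^ p *
                  ((1 - 1 / p) ^ p + C₀ / GQ w μ η t ^ 2)) * Wp w p t * t)
            + L * |u η| ^ p := by
  obtain ⟨η₀, K, hη₀, -, hadm⟩ := hadm
  have hadm' : ∀ᶠ t in 𝓝[>] 0, Real.exp (-K / √t) ≤ fQ w t := by
    filter_upwards [Ioo_mem_nhdsGT hη₀] with t ht using hadm t ht.1 ht.2
  refine ⟨1, one_pos, fun η hη _ => ?_⟩
  obtain ⟨C₀, C₁, L, hC₀, hC₁, hL, hardy⟩ := hardy_Q_admissible_refined_general hp hμ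
    ⟨hw_pos, hw_smooth.continuousOn, hwQ⟩ hadm' hη
  exact ⟨C₀, C₁, L, hC₀, hC₁, hL, fun u u' hu hu' hu₀ => hardy u u' ⟨hu, hu', hu₀⟩⟩
end

section
/- Let w ∈ P(ℝ₊) be admissible, i.e. there exist η₀>0 and K₀>0 with ∫_t^{η₀} w(s)^{-1} ds ≤ e^{K₀/√t} for all 0<t<η₀. Then for every μ>0 there exist positive numbers η and K such that √t · G_η(t) ≤ K for all t ∈ (0,η). -/
open MeasureTheory Set

/-- `f_η(t) = μ + ∫_t^η w(s)⁻¹ ds`  (case `w ∈ P(ℝ₊)`). -/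
noncomputable def fP (w : ℝ → ℝ) (μ η t : ℝ) : ℝ := μ + ∫ s in t..η, (w s)⁻¹

/-- `F_η(t) = w(t) f_η(t)`. -/
noncomputable def FP (w : ℝ → ℝ) (μ η t : ℝ) : ℝ := w t * fP w μ η t

/-- `G_η(t) = μ + ∫_t^η F_η(s)⁻¹ ds`. -/
noncomputable def GP (w : ℝ → ℝ) (μ η t : ℝ) : ℝ := μ + ∫ s in t..η, (FP w μ η s)⁻¹

/-!
The function `f_η` decreases with derivative `-w⁻¹` and `f_η(η) = μ`, so `F_η⁻¹ = -f_η' / f_η` and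
the substitution `u = f_η(s)` gives `G_η(t) = μ + log (f_η(t) / μ)`. Taking a second integral thus
turns the admissibility bound `exp (K₀ / √t)` into `K₀ / √t` plus a constant, and multiplication
by `√t` keeps this bounded.
-/

section

variable {w : ℝ → ℝ} {μ η t a : ℝ}

@[simp]
lemma fP_self : fP w μ η η = μ := by
  simp [fP]

lemma fP_pos (hμ : 0 < μ) (htη : t ≤ η) (hw : ∀ s ∈ Icc t η, 0 ≤ w s) : 0 < fP w μ η t :=
  add_pos_of_pos_of_nonneg hμ <|
    intervalIntegral.integral_nonneg htη fun s hs ↦ inv_nonneg.2 (hw s hs)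

lemma continuousOn_fP (hw : ContinuousOn (fun s ↦ (w s)⁻¹) (uIcc t η)) :
    ContinuousOn (fP w μ η) (uIcc t η) :=
  continuousOn_const.add <|
    intervalIntegral.continuousOn_primitive_interval_left hw.integrableOn_uIcc

lemma hasDerivAt_fP (hw : ContinuousOn (fun s ↦ (w s)⁻¹) (Icc t η)) {s : ℝ} (hs : s ∈ Ioo t η) :
    HasDerivAt (fP w μ η) (-(w s)⁻¹) s := by
  have hint : IntervalIntegrable (fun s ↦ (w s)⁻¹) volume s η :=
    (hw.mono (Icc_subset_Icc_left hs.1.le)).intervalIntegrable_of_Icc hs.2.le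
  have hw' := hw.mono Ioo_subset_Icc_self
  exact (intervalIntegral.integral_hasDerivAt_left hint
    (hw'.stronglyMeasurableAtFilter isOpen_Ioo s hs)
    (hw'.continuousAt (Ioo_mem_nhds hs.1 hs.2))).const_add μ

lemma integral_inv_FP (hμ : 0 < μ) (htη : t ≤ η) (hpos : ∀ s ∈ Icc t η, 0 < w s)
    (hcont : ContinuousOn w (Icc t η)) :
    ∫ s in t..η, (FP w μ η s)⁻¹ = Real.log (fP w μ η t / μ) := by
  have hinv : ContinuousOn (fun s ↦ (w s)⁻¹) (Icc t η) := hcont.inv₀ fun s hs ↦ (hpos s hs).ne'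
  have hinv' : ContinuousOn (fun s ↦ (w s)⁻¹) (uIcc t η) := by rwa [uIcc_of_le htη]
  have hf_pos : ∀ s ∈ Icc t η, 0 < fP w μ η s := fun s hs ↦
    fP_pos hμ hs.2 fun x hx ↦ (hpos x ⟨hs.1.trans hx.1, hx.2⟩).le
  have hderiv : ∀ s ∈ Ioo (min t η) (max t η),
      HasDerivWithinAt (fP w μ η) (-(w s)⁻¹) (Ioi s) s := by
    rw [min_eq_left htη, max_eq_right htη]
    exact fun s hs ↦ (hasDerivAt_fP hinv hs).hasDerivWithinAt
  have hinv_image : ContinuousOn (fun u : ℝ ↦ u⁻¹) (fP w μ η '' uIcc t η) := by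
    refine continuousOn_id.inv₀ ?_
    rw [uIcc_of_le htη]
    rintro _ ⟨s, hs, rfl⟩
    exact (hf_pos s hs).ne'
  calc
    ∫ s in t..η, (FP w μ η s)⁻¹ = -∫ s in t..η, (fP w μ η s)⁻¹ * -(w s)⁻¹ := by
      simp only [FP, mul_inv_rev, mul_neg, intervalIntegral.integral_neg, neg_neg]
    _ = -∫ u in fP w μ η t..fP w μ η η, u⁻¹ := by
      rw [← intervalIntegral.integral_comp_mul_deriv'' (continuousOn_fP hinv') hderiv hinv'.neg
        hinv_image]
      rfl
    _ = Real.log (fP w μ η t / μ) := by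
      rw [← intervalIntegral.integral_symm, fP_self,
        integral_inv_of_pos hμ (hf_pos t (left_mem_Icc.2 htη))]

lemma GP_le_of_integral_le_exp (hμ : 0 < μ) (htη : t ≤ η) (hpos : ∀ s ∈ Icc t η, 0 < w s)
    (hcont : ContinuousOn w (Icc t η)) (ha : 0 ≤ a)
    (hint : ∫ s in t..η, (w s)⁻¹ ≤ Real.exp a) :
    GP w μ η t ≤ μ + Real.log (1 + μ⁻¹) + a := by
  have hf_pos : 0 < fP w μ η t := fP_pos hμ htη fun s hs ↦ (hpos s hs).le
  have hf_le : fP w μ η t / μ ≤ (1 + μ⁻¹) * Real.exp a :=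
    calc
      fP w μ η t / μ ≤ (μ * Real.exp a + Real.exp a) / μ := by
        unfold fP
        gcongr
        exact le_mul_of_one_le_right hμ.le (Real.one_le_exp ha)
      _ = (1 + μ⁻¹) * Real.exp a := by field_simp
  calc
    GP w μ η t = μ + Real.log (fP w μ η t / μ) := by
      rw [GP, integral_inv_FP hμ htη hpos hcont]
    _ ≤ μ + Real.log ((1 + μ⁻¹) * Real.exp a) := by gcongr
    _ = μ + Real.log (1 + μ⁻¹) + a := by
      rw [Real.log_mul (by positivity) (Real.exp_ne_zero a), Real.log_exp, add_assoc]

end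

theorem sqrt_mul_G_bounded_P_general {w : ℝ → ℝ} {μ η K : ℝ} (hpos : ∀ s ∈ Ioc 0 η, 0 < w s)
    (hcont : ContinuousOn w (Ioc 0 η)) (hK : 0 < K)
    (hadm : ∀ t ∈ Ioo 0 η, ∫ s in t..η, (w s)⁻¹ ≤ Real.exp (K / √t)) (hμ : 0 < μ) :
    ∃ C, 0 < C ∧ ∀ t ∈ Ioo 0 η, √t * GP w μ η t ≤ C := by
  have hlog : 0 ≤ Real.log (1 + μ⁻¹) := Real.log_nonneg (by simpa using hμ.le)
  refine ⟨√η * (μ + Real.log (1 + μ⁻¹)) + K, by positivity, fun t ht ↦ ?_⟩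
  have hsqrt : 0 < √t := Real.sqrt_pos.2 ht.1
  have hsub : Icc t η ⊆ Ioc 0 η := Icc_subset_Ioc ht.1 le_rfl
  calc
    √t * GP w μ η t ≤ √t * (μ + Real.log (1 + μ⁻¹) + K / √t) := by
      gcongr
      exact GP_le_of_integral_le_exp hμ ht.2.le (fun s hs ↦ hpos s (hsub hs)) (hcont.mono hsub)
        (by positivity) (hadm t ht)
    _ = √t * (μ + Real.log (1 + μ⁻¹)) + K := by field_simp
    _ ≤ √η * (μ + Real.log (1 + μ⁻¹)) + K := by
      gcongr
      exact ht.2.le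

/-- If `w ∈ P(ℝ₊)` is admissible, then for every `μ > 0` there are
`η, K > 0` with `√t · G_η(t) ≤ K` on `(0,η)`. -/
theorem sqrt_mul_G_bounded_P (w : ℝ → ℝ)
    (hw_pos : ∀ t, 0 < t → 0 < w t)
    (hw_smooth : ContDiffOn ℝ 1 w (Set.Ioi 0))
    (hw_lim : ∃ a : ENNReal, Filter.Tendsto (fun t => ENNReal.ofReal (w t))
        (nhdsWithin (0:ℝ) (Set.Ioi 0)) (nhds a))
    (hwP : ∀ b, 0 < b → ¬ MeasureTheory.IntegrableOn (fun s => (w s)⁻¹) (Set.Ioo 0 b))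
    (hadm : ∃ η₀ K₀ : ℝ, 0 < η₀ ∧ 0 < K₀ ∧ ∀ t, 0 < t → t < η₀ →
        (∫ s in t..η₀, (w s)⁻¹) ≤ Real.exp (K₀ / Real.sqrt t)) :
    ∀ μ : ℝ, 0 < μ → ∃ η K : ℝ, 0 < η ∧ 0 < K ∧
      ∀ t ∈ Set.Ioo (0:ℝ) η, Real.sqrt t * GP w μ η t ≤ K := by
  obtain ⟨η, K, hη, hK, hint⟩ := hadm
  exact fun μ hμ ↦ ⟨η, (sqrt_mul_G_bounded_P_general (fun s hs ↦ hw_pos s hs.1)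
    (hw_smooth.continuousOn.mono Ioc_subset_Ioi_self) hK (fun t ht ↦ hint t ht.1 ht.2) hμ).imp
      fun _ h ↦ ⟨hη, h⟩⟩
end

section
/- Let 1<p<∞, η>0 and R > e. Then for every u ∈ C_c^1((0,η]) one has ∫_0^η |u'(t)|^p t^{p-1} dt + Λ_p^{1/p'} (log R)^{1-p} |u(η)|^p ≥ Λ_p ∫_0^η |u(t)|^p / ( t ( log( Rη/t ) )^p ) dt. -/
open MeasureTheory Set

/-!
Let `L > 0` be decreasing with `L' = -w`, and let `K = (1 - 1 / p) ^ (p - 1)`. Young's inequality,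
applied to `‖u'‖` and `(1 - 1 / p) * ‖u‖ / L`, shows that the derivative of
`-K * ‖u‖ ^ p * L ^ (1 - p)` is at most
`‖u'‖ ^ p * w ^ (1 - p) - (1 - 1 / p) ^ p * ‖u‖ ^ p * w / L ^ p`. Integrating over `[a, b]` gives a
Hardy inequality in which the boundary term at `a` has the favourable sign, so it can be dropped
before letting `a` tend to a singular endpoint. The critical power weight is the case
`w t = 1 / t`, `L t = log (R * η / t)`.
-/

open Filter Topology
open scoped RealInnerProductSpace

section Young

variable {p A B w : ℝ}

lemma one_sub_one_div_pos (hp : 1 < p) : 0 < 1 - 1 / p :=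
  sub_pos.2 ((div_lt_one (zero_lt_one.trans hp)).2 hp)

lemma mul_mul_rpow_sub_one_le (hp : 1 < p) (hA : 0 ≤ A) (hB : 0 ≤ B) :
    p * (A * B ^ (p - 1)) ≤ A ^ p + (p - 1) * B ^ p := by
  have : 0 < p := by linarith
  have hp1 : p - 1 ≠ 0 := by linarith
  have young := Real.young_inequality_of_nonneg hA (Real.rpow_nonneg hB (p - 1))
    (Real.HolderConjugate.conjExponent hp)
  rw [← Real.rpow_mul hB, Real.conjExponent, mul_div_cancel₀ _ hp1] at young
  calc p * (A * B ^ (p - 1)) ≤ p * (A ^ p / p + B ^ p / (p / (p - 1))) := by gcongr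
    _ = A ^ p + (p - 1) * B ^ p := by field_simp

lemma mul_mul_rpow_sub_one_le_weighted (hp : 1 < p) (hA : 0 ≤ A) (hB : 0 ≤ B) (hw : 0 < w) :
    p * (A * B ^ (p - 1)) ≤ A ^ p * w ^ (1 - p) + (p - 1) * (B ^ p * w) := by
  calc p * (A * B ^ (p - 1)) = w * (p * (A / w * B ^ (p - 1))) := by field_simp
    _ ≤ w * ((A / w) ^ p + (p - 1) * B ^ p) := by
      gcongr
      exact mul_mul_rpow_sub_one_le hp (by positivity) hB
    _ = A ^ p * w ^ (1 - p) + (p - 1) * (B ^ p * w) := by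
      rw [Real.div_rpow hA hw.le, Real.rpow_sub hw, Real.rpow_one]
      ring

end Young

section Integrability

variable {a b : ℝ} {E : Type*} [NormedAddCommGroup E]

lemma intervalIntegrable_of_continuousOn_Ioc_of_tendsto {f : ℝ → E} {l : E} (hab : a < b)
    (hf : ContinuousOn f (Ioc a b)) (ha : Tendsto f (𝓝[>] a) (𝓝 l)) :
    IntervalIntegrable f volume a b := by
  have hIoo : ContinuousOn f (Ioo a b) := hf.mono Ioo_subset_Ioc_self
  have hb : Tendsto f (𝓝[<] b) (𝓝 (f b)) := by
    rw [← nhdsWithin_Ioo_eq_nhdsLT hab]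
    exact (hf b (right_mem_Ioc.2 hab)).mono Ioo_subset_Ioc_self
  have hext : IntervalIntegrable (extendFrom (Ioo a b) f) volume a b :=
    (continuousOn_Icc_extendFrom_Ioo hIoo ha hb).intervalIntegrable_of_Icc hab.le
  rw [intervalIntegrable_iff_integrableOn_Ioo_of_le hab.le] at hext ⊢
  exact hext.congr_fun (extendFrom_extends hIoo) measurableSet_Ioo

lemma intervalIntegrable_of_forall_integral_le {f : ℝ → ℝ} {M : ℝ} (hab : a < b)
    (hf : ∀ t ∈ Ioc a b, 0 ≤ f t) (hint : ∀ c ∈ Ioo a b, IntervalIntegrable f volume c b)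
    (hM : ∀ c ∈ Ioo a b, ∫ t in c..b, f t ≤ M) : IntervalIntegrable f volume a b := by
  obtain ⟨c, -, hc, hca⟩ := exists_seq_strictAnti_tendsto' hab
  rw [intervalIntegrable_iff_integrableOn_Ioc_of_le hab.le]
  refine integrableOn_Ioc_of_intervalIntegral_norm_bounded_left (I := M)
    (fun n ↦ (hint (c n) (hc n)).1) hca (.of_forall fun n ↦ ?_)
  have hnorm : EqOn (fun t ↦ ‖f t‖) f (Ioc (c n) b) := fun t ht ↦
    Real.norm_of_nonneg (hf t ⟨(hc n).1.trans ht.1, ht.2⟩)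
  rw [setIntegral_congr_fun measurableSet_Ioc hnorm,
    ← intervalIntegral.integral_of_le (hc n).2.le]
  exact hM (c n) (hc n)

lemma integral_le_of_forall_integral_le {f : ℝ → ℝ} {M : ℝ} (hab : a < b)
    (hint : IntervalIntegrable f volume a b) (hM : ∀ c ∈ Ioo a b, ∫ t in c..b, f t ≤ M) :
    ∫ t in a..b, f t ≤ M := by
  obtain ⟨c, -, hc, hca⟩ := exists_seq_strictAnti_tendsto' hab
  have hcont := intervalIntegral.continuousOn_primitive_interval_left
    ((intervalIntegrable_iff' (μ := volume)).1 hint) a left_mem_uIcc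
  refine le_of_tendsto (hcont.tendsto.comp (tendsto_nhdsWithin_iff.2 ⟨hca, .of_forall fun n ↦ ?_⟩))
    (.of_forall fun n ↦ hM (c n) (hc n))
  exact Icc_subset_uIcc (Ioo_subset_Icc_self (hc n))

end Integrability

section Weighted

variable {E : Type*} [NormedAddCommGroup E] {p a b : ℝ} {u u' : ℝ → E} {w L : ℝ → ℝ}

lemma intervalIntegrable_hardy_potential (hp : 0 ≤ p) (hab : a ≤ b)
    (hu : ContinuousOn u (Icc a b)) (hL : ContinuousOn L (Icc a b))
    (hL' : ∀ t ∈ Ioo a b, HasDerivAt L (-w t) t) (hLpos : ∀ t ∈ Icc a b, 0 < L t)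
    (hw : ∀ t ∈ Ioo a b, 0 ≤ w t) :
    IntervalIntegrable (fun t ↦ ‖u t‖ ^ p * w t / L t ^ p) volume a b := by
  have hwint : IntervalIntegrable w volume a b := by
    rw [intervalIntegrable_iff_integrableOn_Ioc_of_le hab]
    exact intervalIntegral.integrableOn_deriv_of_nonneg hL.neg
      (fun t ht ↦ by simpa only [neg_neg] using (hL' t ht).neg) hw
  have hcont : ContinuousOn (fun t ↦ ‖u t‖ ^ p / L t ^ p) (uIcc a b) := by
    rw [uIcc_of_le hab]
    exact (hu.norm.rpow_const fun _ _ ↦ Or.inr hp).div (hL.rpow_const fun _ _ ↦ Or.inr hp)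
      fun t ht ↦ (Real.rpow_pos_of_pos (hLpos t ht) p).ne'
  simpa only [div_mul_eq_mul_div] using hwint.continuousOn_mul hcont

variable [InnerProductSpace ℝ E]

lemma neg_norm_rpow_sub_two_mul_inner_le (hp : 1 < p) (x v : E) :
    -(‖x‖ ^ (p - 2) * ⟪x, v⟫) ≤ ‖v‖ * ‖x‖ ^ (p - 1) := by
  have hpow : ‖x‖ ^ (p - 1) = ‖x‖ ^ (p - 2) * ‖x‖ := by
    rw [← Real.rpow_add_one' (norm_nonneg x) (by linarith)]
    ring_nf
  calc -(‖x‖ ^ (p - 2) * ⟪x, v⟫) = ‖x‖ ^ (p - 2) * -⟪x, v⟫ := by ring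
    _ ≤ ‖x‖ ^ (p - 2) * (‖x‖ * ‖v‖) := by
      gcongr
      exact (neg_le_abs _).trans (abs_real_inner_le_norm x v)
    _ = ‖v‖ * ‖x‖ ^ (p - 1) := by rw [hpow]; ring

lemma hasDerivAt_norm_rpow_mul_rpow_one_sub {t w₀ : ℝ} {v : E} (hp : 1 < p)
    (hu : HasDerivAt u v t) (hL : HasDerivAt L (-w₀) t) (hLt : 0 < L t) :
    HasDerivAt (fun s ↦ ‖u s‖ ^ p * L s ^ (1 - p))
      (p * (‖u t‖ ^ (p - 2) * ⟪u t, v⟫) * L t ^ (1 - p)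
        + (p - 1) * (‖u t‖ ^ p * w₀ / L t ^ p)) t := by
  have hnorm := (hasFDerivAt_norm_rpow (u t) hp).comp_hasDerivAt t hu
  have hpow : L t ^ (1 - p - 1) = (L t ^ p)⁻¹ := by
    rw [← Real.rpow_neg hLt.le]
    ring_nf
  refine (hnorm.mul (hL.rpow_const (p := 1 - p) (Or.inl hLt.ne'))).congr_deriv ?_
  simp only [hpow, smul_apply, innerSL_apply_apply, smul_eq_mul, Function.comp_apply]
  ring

lemma neg_deriv_norm_rpow_mul_rpow_one_sub_le {l w₀ : ℝ} (hp : 1 < p) (hl : 0 < l) (hw : 0 < w₀)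
    (x v : E) :
    -((1 - 1 / p) ^ (p - 1) * (p * (‖x‖ ^ (p - 2) * ⟪x, v⟫) * l ^ (1 - p)
        + (p - 1) * (‖x‖ ^ p * w₀ / l ^ p)))
      ≤ ‖v‖ ^ p * w₀ ^ (1 - p) - (1 - 1 / p) ^ p * (‖x‖ ^ p * w₀ / l ^ p) := by
  have : 0 < p := by linarith
  have hc : 0 < 1 - 1 / p := one_sub_one_div_pos hp
  have hpc : p - 1 = p * (1 - 1 / p) := by field_simp
  set c := 1 - 1 / p
  have hcp : c ^ p = c ^ (p - 1) * c := by
    rw [← Real.rpow_add_one hc.ne', sub_add_cancel]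
  have hlp : l ^ (1 - p) = (l ^ (p - 1))⁻¹ := by
    rw [← Real.rpow_neg hl.le, neg_sub]
  have cross : -(c ^ (p - 1) * (p * (‖x‖ ^ (p - 2) * ⟪x, v⟫) * l ^ (1 - p)))
      ≤ ‖v‖ ^ p * w₀ ^ (1 - p) + (p - 1) * (c ^ p * (‖x‖ ^ p * w₀ / l ^ p)) :=
    calc -(c ^ (p - 1) * (p * (‖x‖ ^ (p - 2) * ⟪x, v⟫) * l ^ (1 - p)))
        = c ^ (p - 1) * p * l ^ (1 - p) * -(‖x‖ ^ (p - 2) * ⟪x, v⟫) := by ring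
      _ ≤ c ^ (p - 1) * p * l ^ (1 - p) * (‖v‖ * ‖x‖ ^ (p - 1)) := by
        gcongr
        exact neg_norm_rpow_sub_two_mul_inner_le hp x v
      _ = p * (‖v‖ * (c * ‖x‖ / l) ^ (p - 1)) := by
        rw [Real.div_rpow (by positivity) hl.le, Real.mul_rpow hc.le (norm_nonneg x), hlp]
        ring
      _ ≤ ‖v‖ ^ p * w₀ ^ (1 - p) + (p - 1) * ((c * ‖x‖ / l) ^ p * w₀) :=
        mul_mul_rpow_sub_one_le_weighted hp (norm_nonneg v) (by positivity) hw
      _ = ‖v‖ ^ p * w₀ ^ (1 - p) + (p - 1) * (c ^ p * (‖x‖ ^ p * w₀ / l ^ p)) := by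
        rw [Real.div_rpow (by positivity) hl.le, Real.mul_rpow hc.le (norm_nonneg x)]
        ring
  have diag : c ^ (p - 1) * ((p - 1) * (‖x‖ ^ p * w₀ / l ^ p))
      = p * (c ^ p * (‖x‖ ^ p * w₀ / l ^ p)) := by
    rw [hcp, hpc]
    ring
  linarith

theorem hardy_inequality_Icc (hp : 1 < p) (hab : a ≤ b)
    (hu : ContinuousOn u (Icc a b)) (hu' : ∀ t ∈ Ioo a b, HasDerivAt u (u' t) t)
    (hL : ContinuousOn L (Icc a b)) (hL' : ∀ t ∈ Ioo a b, HasDerivAt L (-w t) t)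
    (hLpos : ∀ t ∈ Icc a b, 0 < L t) (hw : ∀ t ∈ Ioo a b, 0 < w t)
    (henergy : IntervalIntegrable (fun t ↦ ‖u' t‖ ^ p * w t ^ (1 - p)) volume a b) :
    IntervalIntegrable (fun t ↦ ‖u t‖ ^ p * w t / L t ^ p) volume a b ∧
      (1 - 1 / p) ^ p * (∫ t in a..b, ‖u t‖ ^ p * w t / L t ^ p)
          + (1 - 1 / p) ^ (p - 1) * (‖u a‖ ^ p * L a ^ (1 - p))
        ≤ (∫ t in a..b, ‖u' t‖ ^ p * w t ^ (1 - p))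
          + (1 - 1 / p) ^ (p - 1) * (‖u b‖ ^ p * L b ^ (1 - p)) := by
  have hp0 : 0 ≤ p := by linarith
  have hpot := intervalIntegrable_hardy_potential hp0 hab hu hL hL' hLpos fun t ht ↦ (hw t ht).le
  have hpot_mul := hpot.const_mul ((1 - 1 / p) ^ p)
  have hcont : ContinuousOn (fun t ↦ -((1 - 1 / p) ^ (p - 1) * (‖u t‖ ^ p * L t ^ (1 - p))))
      (Icc a b) :=
    (continuousOn_const.mul ((hu.norm.rpow_const fun _ _ ↦ Or.inr hp0).mul
      (hL.rpow_const fun t ht ↦ Or.inl (hLpos t ht).ne'))).neg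
  have key := intervalIntegral.sub_le_integral_of_hasDeriv_right_of_le hab hcont
    (fun t ht ↦ ((hasDerivAt_norm_rpow_mul_rpow_one_sub hp (hu' t ht) (hL' t ht)
      (hLpos t (Ioo_subset_Icc_self ht))).const_mul _).neg.hasDerivWithinAt)
    ((intervalIntegrable_iff_integrableOn_Icc_of_le hab).1 (henergy.sub hpot_mul))
    (fun t ht ↦ neg_deriv_norm_rpow_mul_rpow_one_sub_le hp (hLpos t (Ioo_subset_Icc_self ht))
      (hw t ht) (u t) (u' t))
  rw [intervalIntegral.integral_sub henergy hpot_mul, intervalIntegral.integral_const_mul] at key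
  exact ⟨hpot, by linarith⟩

theorem hardy_inequality_Ioc (hp : 1 < p) (hab : a < b)
    (hu : ContinuousOn u (Ioc a b)) (hu' : ∀ t ∈ Ioo a b, HasDerivAt u (u' t) t)
    (hL : ContinuousOn L (Ioc a b)) (hL' : ∀ t ∈ Ioo a b, HasDerivAt L (-w t) t)
    (hLpos : ∀ t ∈ Ioc a b, 0 < L t) (hw : ∀ t ∈ Ioc a b, 0 < w t)
    (henergy : IntervalIntegrable (fun t ↦ ‖u' t‖ ^ p * w t ^ (1 - p)) volume a b) :
    IntervalIntegrable (fun t ↦ ‖u t‖ ^ p * w t / L t ^ p) volume a b ∧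
      (1 - 1 / p) ^ p * (∫ t in a..b, ‖u t‖ ^ p * w t / L t ^ p)
        ≤ (∫ t in a..b, ‖u' t‖ ^ p * w t ^ (1 - p))
          + (1 - 1 / p) ^ (p - 1) * (‖u b‖ ^ p * L b ^ (1 - p)) := by
  have : 0 < p := by linarith
  have hc : 0 < 1 - 1 / p := one_sub_one_div_pos hp
  have hcp : 0 < (1 - 1 / p) ^ p := Real.rpow_pos_of_pos hc p
  have hhardy := fun c (hc : c ∈ Ioo a b) ↦ by
    have hIcc : Icc c b ⊆ Ioc a b := fun t ht ↦ ⟨hc.1.trans_le ht.1, ht.2⟩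
    have hIoo : Ioo c b ⊆ Ioo a b := Ioo_subset_Ioo_left hc.1.le
    exact hardy_inequality_Icc hp hc.2.le (hu.mono hIcc) (fun t ht ↦ hu' t (hIoo ht)) (hL.mono hIcc)
      (fun t ht ↦ hL' t (hIoo ht)) (fun t ht ↦ hLpos t (hIcc ht))
      (fun t ht ↦ hw t (Ioo_subset_Ioc_self (hIoo ht)))
      (henergy.mono_set (uIcc_subset_uIcc_right (Ioo_subset_Icc_self.trans Icc_subset_uIcc hc)))
  have hnonneg : ∀ t ∈ Ioc a b, 0 ≤ ‖u t‖ ^ p * w t / L t ^ p := fun t ht ↦ by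
    have := hLpos t ht
    have := hw t ht
    positivity
  have henergy_mono : ∀ c ∈ Ioo a b, ∫ t in c..b, ‖u' t‖ ^ p * w t ^ (1 - p)
      ≤ ∫ t in a..b, ‖u' t‖ ^ p * w t ^ (1 - p) := fun c hc ↦ by
    refine intervalIntegral.integral_mono_interval hc.1.le hc.2.le le_rfl ?_ henergy
    filter_upwards [ae_restrict_mem measurableSet_Ioc] with t ht
    have := hw t ht
    positivity
  have hbound : ∀ c ∈ Ioo a b, ∫ t in c..b, ‖u t‖ ^ p * w t / L t ^ p
      ≤ ((∫ t in a..b, ‖u' t‖ ^ p * w t ^ (1 - p))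
          + (1 - 1 / p) ^ (p - 1) * (‖u b‖ ^ p * L b ^ (1 - p))) / (1 - 1 / p) ^ p := fun c hc ↦ by
    have hboundary : 0 ≤ (1 - 1 / p) ^ (p - 1) * (‖u c‖ ^ p * L c ^ (1 - p)) := by
      have := hLpos c (Ioo_subset_Ioc_self hc)
      positivity
    rw [le_div_iff₀' hcp]
    linarith [henergy_mono c hc, (hhardy c hc).2]
  have hint := intervalIntegrable_of_forall_integral_le hab hnonneg
    (fun c hc ↦ (hhardy c hc).1) hbound
  exact ⟨hint, (le_div_iff₀' hcp).1 (integral_le_of_forall_integral_le hab hint hbound)⟩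

end Weighted

section CriticalPower

variable {E : Type*} [NormedAddCommGroup E] {p η R : ℝ}

lemma log_mul_div_pos (hR : 1 < R) {t : ℝ} (ht : t ∈ Ioc 0 η) : 0 < Real.log (R * η / t) := by
  refine Real.log_pos ((one_lt_div ht.1).2 ?_)
  nlinarith [ht.1, ht.2]

lemma hasDerivAt_log_const_div {C t : ℝ} (hC : C ≠ 0) (ht : t ≠ 0) :
    HasDerivAt (fun s ↦ Real.log (C / s)) (-t⁻¹) t := by
  refine (((hasDerivAt_const t C).div (hasDerivAt_id t) ht).log (div_ne_zero hC ht)).congr_deriv ?_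
  simp only [Pi.div_apply, id]
  field_simp
  ring

lemma eventuallyEq_zero_of_hasDerivAt [NormedSpace ℝ E] {a b : ℝ} {u u' : ℝ → E} (hab : a < b)
    (hu' : ∀ t ∈ Ioo a b, HasDerivAt u (u' t) t) (hu : u =ᶠ[𝓝[>] a] 0) : u' =ᶠ[𝓝[>] a] 0 := by
  filter_upwards [eventually_eventually_nhdsWithin.2 hu, Ioo_mem_nhdsGT hab] with t hut ht
  rw [isOpen_Ioi.nhdsWithin_eq ht.1] at hut
  exact (hu' t ht).unique ((hasDerivAt_const t (0 : E)).congr_of_eventuallyEq hut)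

lemma intervalIntegrable_norm_rpow_mul_rpow {v : ℝ → E} {q : ℝ} (hp : 0 < p) (hη : 0 < η)
    (hv : ContinuousOn v (Ioc 0 η)) (hv0 : v =ᶠ[𝓝[>] 0] 0) :
    IntervalIntegrable (fun t ↦ ‖v t‖ ^ p * t ^ q) volume 0 η := by
  have hcont : ContinuousOn (fun t ↦ ‖v t‖ ^ p * t ^ q) (Ioc 0 η) :=
    (hv.norm.rpow_const fun _ _ ↦ Or.inr hp.le).mul
      (continuousOn_id.rpow_const fun t ht ↦ Or.inl ht.1.ne')
  have hzero : (fun t ↦ ‖v t‖ ^ p * t ^ q) =ᶠ[𝓝[>] 0] fun _ ↦ 0 := by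
    filter_upwards [hv0] with t ht
    simp only [ht, Pi.zero_apply, norm_zero, Real.zero_rpow hp.ne', zero_mul]
  exact intervalIntegrable_of_continuousOn_Ioc_of_tendsto hη hcont
    (tendsto_const_nhds.congr' hzero.symm)

theorem hardy_power_critical_general [InnerProductSpace ℝ E] (hp : 1 < p) (hη : 0 < η)
    (hR : 1 < R) {u u' : ℝ → E}
    (hu : ∀ t ∈ Ioc 0 η, HasDerivWithinAt u (u' t) (Ioc 0 η) t)
    (henergy : IntervalIntegrable (fun t ↦ ‖u' t‖ ^ p * t ^ (p - 1)) volume 0 η) :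
    IntervalIntegrable (fun t ↦ ‖u t‖ ^ p / (t * Real.log (R * η / t) ^ p)) volume 0 η ∧
      (∫ t in (0 : ℝ)..η, ‖u' t‖ ^ p * t ^ (p - 1))
        + ((1 - 1 / p) ^ p) ^ ((p - 1) / p) * Real.log R ^ (1 - p) * ‖u η‖ ^ p
      ≥ (1 - 1 / p) ^ p * ∫ t in (0 : ℝ)..η, ‖u t‖ ^ p / (t * Real.log (R * η / t) ^ p) := by
  have hp0 : 0 < p := by linarith
  have hc : 0 < 1 - 1 / p := one_sub_one_div_pos hp
  have hRη : R * η ≠ 0 := by positivity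
  have hweight : EqOn (fun t ↦ ‖u' t‖ ^ p * t⁻¹ ^ (1 - p)) (fun t ↦ ‖u' t‖ ^ p * t ^ (p - 1))
      (uIoc 0 η) := fun t ht ↦ by
    rw [uIoc_of_le hη.le] at ht
    simp only [Real.inv_rpow ht.1.le, ← Real.rpow_neg ht.1.le, neg_sub]
  have hL' : ∀ t ∈ Ioc 0 η, HasDerivAt (fun s ↦ Real.log (R * η / s)) (-t⁻¹) t := fun t ht ↦
    hasDerivAt_log_const_div hRη ht.1.ne'
  obtain ⟨hint, hhardy⟩ := hardy_inequality_Ioc hp hη (fun t ht ↦ (hu t ht).continuousWithinAt)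
    (fun t ht ↦ (hu t (Ioo_subset_Ioc_self ht)).hasDerivAt (Ioc_mem_nhds ht.1 ht.2))
    (fun t ht ↦ (hL' t ht).continuousAt.continuousWithinAt)
    (fun t ht ↦ hL' t (Ioo_subset_Ioc_self ht)) (fun t ht ↦ log_mul_div_pos hR ht)
    (fun t ht ↦ inv_pos.2 ht.1) (henergy.congr hweight.symm)
  have hconst : ((1 - 1 / p) ^ p) ^ ((p - 1) / p) = (1 - 1 / p) ^ (p - 1) := by
    rw [← Real.rpow_mul hc.le, mul_div_cancel₀ _ hp0.ne']
  have hpot : ∀ t, ‖u t‖ ^ p * t⁻¹ / Real.log (R * η / t) ^ p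
      = ‖u t‖ ^ p / (t * Real.log (R * η / t) ^ p) := fun t ↦ by
    rw [← div_eq_mul_inv, div_div]
  simp only [hpot, mul_div_cancel_right₀ R hη.ne'] at hint hhardy
  rw [intervalIntegral.integral_congr_ae (.of_forall hweight)] at hhardy
  refine ⟨hint, ?_⟩
  rw [hconst]
  linarith

end CriticalPower

/-- Critical power-weight Hardy inequality (`α = 1/p'`), with
logarithmic Hardy potential and one-sided boundary term, for `R > e`. -/
theorem hardy_power_critical (p η R : ℝ) (hp : 1 < p) (hη : 0 < η)
    (hR : Real.exp 1 < R)
    (u u' : ℝ → ℝ)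
    (hu : ∀ t ∈ Set.Ioc (0:ℝ) η, HasDerivWithinAt u (u' t) (Set.Ioc (0:ℝ) η) t)
    (hu'c : ContinuousOn u' (Set.Ioc (0:ℝ) η))
    (hsupp : ∃ a, 0 < a ∧ ∀ t ≤ a, u t = 0) :
    (∫ t in (0:ℝ)..η, |u' t| ^ p * t ^ (p - 1))
      + ((1 - 1 / p) ^ p) ^ ((p - 1) / p) * Real.log R ^ (1 - p) * |u η| ^ p
    ≥ (1 - 1 / p) ^ p *
        ∫ t in (0:ℝ)..η, |u t| ^ p / (t * Real.log (R * η / t) ^ p) := by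
  obtain ⟨a, ha, hua⟩ := hsupp
  have hu0 : u =ᶠ[𝓝[>] 0] 0 := nhdsWithin_le_nhds ((eventually_le_nhds ha).mono hua)
  have hu'0 : u' =ᶠ[𝓝[>] 0] 0 := eventuallyEq_zero_of_hasDerivAt hη
    (fun t ht ↦ (hu t (Ioo_subset_Ioc_self ht)).hasDerivAt (Ioc_mem_nhds ht.1 ht.2)) hu0
  exact (hardy_power_critical_general hp hη ((Real.one_lt_exp_iff.2 one_pos).trans hR) hu
    (intervalIntegrable_norm_rpow_mul_rpow (zero_lt_one.trans hp) hη hu'c hu'0)).2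
end
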